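/- arXiv:1410.3247 — 2 statements merged into one kernel-verified Lean document; each statement's English description precedes it below -/
import Mathlib

section
/- For each integer w ≥ 2, there exists a regular poset (P, A_1,…,A_n) of width w such that P contains an induced copy of the ladder L_{w·⌊(w+2)/2⌋}. -/
/-- `S` is an antichain with respect to the order relation `le`. -/
def IsAntichainOn {α : Type*} (le : α → α → Prop) (S : Finset α) : Prop :=
  ∀ a ∈ S, ∀ b ∈ S, a ≠ b → ¬ le a b ∧ ¬ le b a

/-- The poset `(α, le)` has width `w`: there is an antichain of size `w`
and every antichain has size at most `w`. -/
def IsWidth {α : Type*} (le : α → α → Prop) (w : ℕ) : Prop :=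
  (∃ S : Finset α, IsAntichainOn le S ∧ S.card = w) ∧
    ∀ S : Finset α, IsAntichainOn le S → S.card ≤ w

/-- `g` is an `n`-Grundy coloring of the poset `(α, le)`:
`g` takes values in `{1,…,n}`, is surjective onto `{1,…,n}`,
each color class is a chain (G1), and each vertex of color `j`
has an incomparable witness of every smaller color (G3). -/
def IsGrundy {α : Type*} (le : α → α → Prop) (n : ℕ) (g : α → ℕ) : Prop :=
  (∀ v, 1 ≤ g v ∧ g v ≤ n) ∧
  (∀ i, 1 ≤ i → i ≤ n → ∃ v, g v = i) ∧
  (∀ u v, g u = g v → le u v ∨ le v u) ∧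
  (∀ v i, 1 ≤ i → i < g v → ∃ u, (¬ le u v ∧ ¬ le v u) ∧ g u = i)

/-- `c` is the First-Fit chain partition of the poset `(α, le)` presented in the
strict total order `prec`: every vertex `v` gets the least color `c v ≥ 1` such
that all `prec`-earlier vertices of the same color are comparable to `v`. -/
def IsFFColoring {α : Type*} (le prec : α → α → Prop) (c : α → ℕ) : Prop :=
  ∀ v, 1 ≤ c v ∧
    (∀ u, prec u v → c u = c v → le u v ∨ le v u) ∧
    (∀ j, 1 ≤ j → j < c v → ∃ u, prec u v ∧ c u = j ∧ ¬ le u v ∧ ¬ le v u)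

/-- The sequences `x` (lower leg) and `y` (upper leg) form an induced copy of
the `m`-ladder `L_m` in the poset `(α, le)`. -/
def IsLadderIn {α : Type*} (le : α → α → Prop) {m : ℕ} (x y : Fin m → α) : Prop :=
  (∀ i j : Fin m, i < j → le (x i) (x j) ∧ x i ≠ x j) ∧
  (∀ i j : Fin m, i < j → le (y i) (y j) ∧ y i ≠ y j) ∧
  (∀ i : Fin m, le (x i) (y i) ∧ x i ≠ y i) ∧
  (∀ i j : Fin m, i < j → ¬ le (y i) (x j) ∧ ¬ le (x j) (y i))

/-- The poset `(α, le)` contains no induced copy of the `m`-ladder `L_m`. -/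
def LFree {α : Type*} (le : α → α → Prop) (m : ℕ) : Prop :=
  ¬ ∃ x y : Fin m → α, IsLadderIn le x y

/-- `A ⊑ B`: every element of `A` is `le`-below some element of `B`. -/
def Below {α : Type*} (le : α → α → Prop) (A B : Finset α) : Prop :=
  ∀ a ∈ A, ∃ b ∈ B, le a b

/-- `A ⊏ B`: `A ⊑ B` and `A ≠ B`. -/
def StrictBelow {α : Type*} (le : α → α → Prop) (A B : Finset α) : Prop :=
  Below le A B ∧ A ≠ B

/-- The bipartite poset induced by antichains `A` and `B` (with `A` below `B`)
is a core: `|A| = |B|` and every comparable pair `x ≤ y` with `x ∈ A`, `y ∈ B`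
is a Dilworth edge, i.e. belongs to a perfect matching of comparable pairs. -/
def IsCore {α : Type*} (le : α → α → Prop) (A B : Finset α) : Prop :=
  A.card = B.card ∧
    ∀ x ∈ A, ∀ y ∈ B, le x y →
      ∃ f : α → α, Set.BijOn f ↑A ↑B ∧ (∀ a ∈ A, le a (f a)) ∧ f x = y

/-- `A j = A_{s(i)}`: among the antichains presented before `A i`, it is the
`⊑`-least one strictly above `A i`. -/
def IsSuccIdx {α : Type*} (le : α → α → Prop) {n : ℕ} (A : Fin n → Finset α)
    (i j : Fin n) : Prop :=
  j < i ∧ StrictBelow le (A i) (A j) ∧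
    ∀ k : Fin n, k < i → StrictBelow le (A i) (A k) → Below le (A j) (A k)

/-- `A j = A_{p(i)}`: among the antichains presented before `A i`, it is the
`⊑`-greatest one strictly below `A i`. -/
def IsPredIdx {α : Type*} (le : α → α → Prop) {n : ℕ} (A : Fin n → Finset α)
    (i j : Fin n) : Prop :=
  j < i ∧ StrictBelow le (A j) (A i) ∧
    ∀ k : Fin n, k < i → StrictBelow le (A k) (A i) → Below le (A k) (A j)

/-- `(P, A_1, …, A_n)` is a regular poset of width `w`: the `A i` are pairwise
disjoint maximum antichains (each of size `w`, the width of `P`) covering `P`,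
linearly ordered by `⊑`; consecutive-at-presentation-time pairs induce cores
(R4); and every comparability with an earlier antichain factors through the
`⊑`-neighbors at presentation time (R5). -/
def IsRegularPoset {α : Type*} (le : α → α → Prop) (w : ℕ) {n : ℕ}
    (A : Fin n → Finset α) : Prop :=
  (∀ v : α, ∃ i, v ∈ A i) ∧
  (∀ i j : Fin n, i ≠ j → ∀ v ∈ A i, v ∉ A j) ∧
  (∀ i, IsAntichainOn le (A i)) ∧
  (∀ i, (A i).card = w) ∧
  IsWidth le w ∧
  (∀ i j : Fin n, Below le (A i) (A j) ∨ Below le (A j) (A i)) ∧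
  (∀ i j : Fin n, IsSuccIdx le A i j → IsCore le (A i) (A j)) ∧
  (∀ i j : Fin n, IsPredIdx le A i j → IsCore le (A j) (A i)) ∧
  (∀ (i j : Fin n) (x y : α), x ∈ A i → y ∈ A j → le x y → x ≠ y →
    (j < i → ∃ k, IsSuccIdx le A i k ∧ ∃ z ∈ A k, le x z ∧ x ≠ z ∧ le z y) ∧
    (i < j → ∃ k, IsPredIdx le A j k ∧ ∃ z ∈ A k, le x z ∧ le z y ∧ z ≠ y))

/-- `x` is an ascending chain: increasing both in the poset and in color. -/
def IsAscending {α : Type*} (le : α → α → Prop) (g : α → ℕ) {k : ℕ}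
    (x : Fin k → α) : Prop :=
  ∀ i j : Fin k, i < j → (le (x i) (x j) ∧ x i ≠ x j) ∧ g (x i) < g (x j)

/-- `x` is a descending chain: decreasing in the poset, increasing in color. -/
def IsDescending {α : Type*} (le : α → α → Prop) (g : α → ℕ) {k : ℕ}
    (x : Fin k → α) : Prop :=
  ∀ i j : Fin k, i < j → (le (x j) (x i) ∧ x i ≠ x j) ∧ g (x i) < g (x j)

/-- The order of the lexicographic product `P · Q`. -/
def LexLe {α β : Type*} (leP : α → α → Prop) (leQ : β → β → Prop) :
    α × β → α × β → Prop :=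
  fun a b => (leP a.1 b.1 ∧ a.1 ≠ b.1) ∨ (a.1 = b.1 ∧ leQ a.2 b.2)
namespace Lad

/-- levels `p < q` are neighbours at the time when the later of them is presented -/
def Cons (t : ℕ → ℕ) (p q : ℕ) : Prop :=
  p < q ∧ ∀ r, p < r → r < q → t p < t r ∧ t q < t r

def Edge (t : ℕ → ℕ) (D : ℕ → ℕ → ℕ → ℕ → Prop) (v v' : ℕ × ℕ) : Prop :=
  Cons t v.1 v'.1 ∧ D v.1 v'.1 v.2 v'.2

def Le (t : ℕ → ℕ) (D : ℕ → ℕ → ℕ → ℕ → Prop) : ℕ × ℕ → ℕ × ℕ → Prop :=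
  Relation.ReflTransGen (Edge t D)

/-- the local hypotheses -/
structure Good (w : ℕ) (t : ℕ → ℕ) (D : ℕ → ℕ → ℕ → ℕ → Prop) : Prop where
  rfl' : ∀ p q c, D p q c c
  sym : ∀ p q c c', D p q c c' → D p q c' c
  bd : ∀ p q c c', D p q c c' → c = c' ∨ (c < w ∧ c' < w)
  inj : ∀ p q, t p = t q → p = q
  comp : ∀ p a q c d c', Cons t p a → Cons t a q → Cons t p q →
    D p a c d → D a q d c' → D p q c c'

variable {w : ℕ} {t : ℕ → ℕ} {D : ℕ → ℕ → ℕ → ℕ → Prop}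

theorem le_lvl {v v' : ℕ × ℕ} (h : Le t D v v') : v = v' ∨ v.1 < v'.1 := by
  induction h with
  | refl => exact Or.inl rfl
  | tail _ h2 ih =>
    right
    rcases ih with ih | ih
    · rw [ih]; exact h2.1.1
    · exact ih.trans h2.1.1

theorem le_lvl' {v v' : ℕ × ℕ} (h : Le t D v v') : v.1 ≤ v'.1 := by
  rcases le_lvl h with h | h
  · rw [h]
  · exact h.le

theorem le_antisymm' {v v' : ℕ × ℕ} (h : Le t D v v') (h' : Le t D v' v) : v = v' := by
  rcases le_lvl h with h1 | h1
  · exact h1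
  · exact absurd (le_lvl' h') (by omega)

theorem le_bd (hG : Good w t D) {v v' : ℕ × ℕ} (h : Le t D v v') (hv : v.2 < w) : v'.2 < w := by
  induction h with
  | refl => exact hv
  | tail _ h2 ih =>
    rcases hG.bd _ _ _ _ h2.2 with h | h
    · rw [← h]; exact ih
    · exact h.2

theorem le_id (hG : Good w t D) {p q : ℕ} (c : ℕ) (h : p ≤ q) : Le t D (p, c) (q, c) := by
  induction q, h using Nat.le_induction with
  | base => exact Relation.ReflTransGen.refl
  | succ n _ ih =>
    refine ih.tail ⟨⟨by simp, ?_⟩, hG.rfl' _ _ _⟩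
    intro r h1 h2
    simp at h1 h2
    omega

theorem le_edge {p q c c' : ℕ} (h : Cons t p q) (h' : D p q c c') : Le t D (p, c) (q, c') :=
  Relation.ReflTransGen.single ⟨h, h'⟩

theorem le_closed (W : ℕ × ℕ → Prop) (hW : ∀ v v', Edge t D v v' → W v → W v') {v v' : ℕ × ℕ}
    (h : Le t D v v') (hv : W v) : W v' := by
  induction h with
  | refl => exact hv
  | tail _ h2 ih => exact hW _ _ h2 ih

theorem le_hit {v v' : ℕ × ℕ} {k : ℕ} (h : Le t D v v') (h1 : v.1 ≤ k) (h2 : k ≤ v'.1)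
    (hj : ∀ a b, v.1 ≤ a → a < k → k < b → b ≤ v'.1 → ¬ Cons t a b) :
    ∃ c, Le t D v (k, c) ∧ Le t D (k, c) v' := by
  induction h with
  | refl =>
    have : v.1 = k := le_antisymm h1 h2
    subst this
    exact ⟨v.2, Relation.ReflTransGen.refl, Relation.ReflTransGen.refl⟩
  | @tail b c hb hc ih =>
    by_cases hk : k ≤ b.1
    · obtain ⟨d, hd1, hd2⟩ := ih hk (fun x y hx1 hx2 hx3 hx4 =>
        hj x y hx1 hx2 hx3 (hx4.trans hc.1.1.le))
      exact ⟨d, hd1, hd2.tail hc⟩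
    · have : k = c.1 := by
        by_contra hne
        exact hj b.1 c.1 (le_lvl' hb) (by omega) (by omega) le_rfl hc.1
      subst this
      exact ⟨c.2, hb.tail hc, Relation.ReflTransGen.refl⟩

theorem le_core (hG : Good w t D) : ∀ (m p q c c' : ℕ), q - p ≤ m → Cons t p q →
    Le t D (p, c) (q, c') → D p q c c' := by
  intro m
  induction m with
  | zero => intro p q c c' h hc; have := hc.1; omega
  | succ m ih =>
    intro p q c c' hm hc hle
    rcases Relation.ReflTransGen.cases_head hle with h | ⟨⟨b, d⟩, he, hrest⟩
    · have := hc.1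
      simp at h; omega
    have hpb : p < b := he.1.1
    have hbq : b ≤ q := le_lvl' hrest
    rcases hbq.eq_or_lt with hbq | hbq
    · subst hbq
      rcases le_lvl hrest with h | h
      · simp at h; subst h; exact he.2
      · simp at h
    · obtain ⟨a, ha, hmin⟩ := Finset.exists_min_image (Finset.Ioo p q) t
        ⟨b, by simp [hpb, hbq]⟩
      simp only [Finset.mem_Ioo] at ha hmin
      have hlt : ∀ r, p < r → r < q → r ≠ a → t a < t r := by
        intro r h1 h2 h3
        refine lt_of_le_of_ne (hmin r ⟨h1, h2⟩) ?_
        intro h4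
        exact h3 (hG.inj _ _ h4).symm
      have hpa : Cons t p a := by
        refine ⟨ha.1, fun r h1 h2 => ⟨(hc.2 r h1 (by omega)).1, hlt r h1 (by omega) (by omega)⟩⟩
      have haq : Cons t a q := by
        refine ⟨ha.2, fun r h1 h2 => ⟨hlt r (by omega) h2 (by omega), (hc.2 r (by omega) h2).2⟩⟩
      have hba : b ≤ a := by
        by_contra hba
        have h1 := (he.1.2 a ha.1 (by simp; omega)).2
        have h2 := hlt b hpb hbq (by omega)
        simp at h1
        omega
      obtain ⟨e, he1, he2⟩ := le_hit (k := a) hrest hba ha.2.le (by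
        intro x y hx1 hx2 hx3 hx4 hcons
        simp at hx1 hx4
        have h1 := (hcons.2 a hx2 hx3).1
        have h2 := hlt x (by omega) (by omega) (by omega)
        omega)
      have hpe : Le t D (p, c) (a, e) := Relation.ReflTransGen.head he he1
      exact hG.comp p a q c e c' hpa haq hc (ih _ _ _ _ (by omega) hpa hpe)
        (ih _ _ _ _ (by omega) haq he2)

end Lad

namespace Lad

variable {w : ℕ} {t : ℕ → ℕ} {D : ℕ → ℕ → ℕ → ℕ → Prop}

/-- coordinates -/
def co {n w : ℕ} (v : Fin (n * w)) : ℕ × ℕ :=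
  ((finProdFinEquiv.symm v).1.1, (finProdFinEquiv.symm v).2.1)

theorem co_inj {n w : ℕ} {v v' : Fin (n * w)} (h : co v = co v') : v = v' := by
  simp only [co, Prod.mk.injEq] at h
  apply finProdFinEquiv.symm.injective
  exact Prod.ext (Fin.ext h.1) (Fin.ext h.2)

theorem co_lt1 {n w : ℕ} (v : Fin (n * w)) : (co v).1 < n := Fin.is_lt _
theorem co_lt2 {n w : ℕ} (v : Fin (n * w)) : (co v).2 < w := Fin.is_lt _

theorem co_surj {n w : ℕ} {p c : ℕ} (hp : p < n) (hc : c < w) :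
    ∃ v : Fin (n * w), co v = (p, c) :=
  ⟨finProdFinEquiv (⟨p, hp⟩, ⟨c, hc⟩), by simp [co]⟩

def leF (t : ℕ → ℕ) (D : ℕ → ℕ → ℕ → ℕ → Prop) (n w : ℕ) (v v' : Fin (n * w)) : Prop :=
  Le t D (co v) (co v')

def AF (n w : ℕ) (e : Equiv.Perm (Fin n)) (i : Fin n) : Finset (Fin (n * w)) :=
  Finset.univ.filter (fun v => (co v).1 = (e i).1)

theorem mem_AF {n w : ℕ} {e : Equiv.Perm (Fin n)} {i : Fin n} {v : Fin (n * w)} :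
    v ∈ AF n w e i ↔ (co v).1 = (e i).1 := by simp [AF]

theorem card_AF {n w : ℕ} {e : Equiv.Perm (Fin n)} {i : Fin n} : (AF n w e i).card = w := by
  have : AF n w e i = Finset.univ.image (fun c : Fin w => finProdFinEquiv (e i, c)) := by
    ext v
    simp only [mem_AF, Finset.mem_image, Finset.mem_univ, true_and]
    constructor
    · intro h
      refine ⟨(finProdFinEquiv.symm v).2, ?_⟩
      rw [← Equiv.eq_symm_apply]
      refine Prod.ext (Fin.ext ?_) rfl
      exact h.symm
    · rintro ⟨c, rfl⟩
      simp [co]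
  rw [this, Finset.card_image_of_injective]
  · simp
  · intro a b h
    simpa using h

theorem below_iff (hG : Good w t D) (hw : 0 < w) {n : ℕ} {e : Equiv.Perm (Fin n)} {i j : Fin n} :
    Below (leF t D n w) (AF n w e i) (AF n w e j) ↔ (e i).1 ≤ (e j).1 := by
  constructor
  · intro h
    obtain ⟨v, hv⟩ := co_surj (n := n) (w := w) (e i).2 hw
    obtain ⟨b, hb, hle⟩ := h v (by rw [mem_AF, hv])
    have := le_lvl' hle
    rw [mem_AF] at hb
    rw [hv, hb] at this
    exact this
  · intro h a ha
    rw [mem_AF] at ha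
    obtain ⟨v, hv⟩ := co_surj (n := n) (w := w) (e j).2 (co_lt2 a)
    refine ⟨v, by rw [mem_AF, hv], ?_⟩
    unfold leF
    rw [hv]
    have := le_id hG (co a).2 h
    rw [← ha] at this
    exact this

theorem AF_inj (hw : 0 < w) {n : ℕ} {e : Equiv.Perm (Fin n)} {i j : Fin n}
    (h : AF n w e i = AF n w e j) : i = j := by
  obtain ⟨v, hv⟩ := co_surj (n := n) (w := w) (e i).2 hw
  have : v ∈ AF n w e j := by rw [← h, mem_AF, hv]
  rw [mem_AF, hv] at this
  exact e.injective (Fin.ext this)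

theorem sbelow_iff (hG : Good w t D) (hw : 0 < w) {n : ℕ} {e : Equiv.Perm (Fin n)} {i j : Fin n} :
    StrictBelow (leF t D n w) (AF n w e i) (AF n w e j) ↔ (e i).1 < (e j).1 := by
  unfold StrictBelow
  rw [below_iff hG hw]
  constructor
  · rintro ⟨h1, h2⟩
    refine lt_of_le_of_ne h1 ?_
    intro h
    apply h2
    rw [e.injective (Fin.ext h)]
  · intro h
    refine ⟨h.le, ?_⟩
    intro h'
    rw [AF_inj hw h'] at h
    omega

theorem core_of_cons (hG : Good w t D) {n : ℕ} {e : Equiv.Perm (Fin n)} {i j : Fin n}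
    (hc : Cons t (e i).1 (e j).1) : IsCore (leF t D n w) (AF n w e i) (AF n w e j) := by
  refine ⟨by rw [card_AF, card_AF], ?_⟩
  intro x hx y hy hle
  rw [mem_AF] at hx hy
  have hD : D (e i).1 (e j).1 (co x).2 (co y).2 := by
    apply le_core hG _ _ _ _ _ le_rfl hc
    rw [← hx, ← hy]; exact hle
  set cx := (finProdFinEquiv.symm x).2 with hcx
  set cy := (finProdFinEquiv.symm y).2 with hcy
  have hD' : D (e i).1 (e j).1 cx.1 cy.1 := hD
  refine ⟨fun v => finProdFinEquiv (e j, Equiv.swap cx cy (finProdFinEquiv.symm v).2), ?_, ?_, ?_⟩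
  · refine ⟨?_, ?_, ?_⟩
    · intro v _
      simp [mem_AF, co]
    · intro v hv v' hv' h
      simp only [Finset.mem_coe, mem_AF] at hv hv'
      simp at h
      apply finProdFinEquiv.symm.injective
      refine Prod.ext (Fin.ext (hv.trans hv'.symm)) (Fin.ext ?_)
      simpa using congrArg Fin.val h
    · intro v hv
      simp only [Finset.mem_coe, mem_AF] at hv
      refine ⟨finProdFinEquiv (e i, Equiv.swap cx cy (finProdFinEquiv.symm v).2), ?_, ?_⟩
      · simp [mem_AF, co]
      · simp only [Equiv.symm_apply_apply, Equiv.swap_apply_self]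
        rw [← Equiv.eq_symm_apply]
        exact Prod.ext (Fin.ext hv.symm) rfl
  · intro a ha
    rw [mem_AF] at ha
    refine Relation.ReflTransGen.single ⟨?_, ?_⟩
    · rw [ha]; simpa [co] using hc
    · rw [ha]
      have h2 : (co a).2 = (finProdFinEquiv.symm a).2.1 := rfl
      rw [h2]
      simp only [co, Equiv.symm_apply_apply]
      generalize (finProdFinEquiv.symm a).2 = ca
      by_cases h3 : ca = cx
      · rw [h3, Equiv.swap_apply_left]; exact hD'
      by_cases h4 : ca = cy
      · rw [h4, Equiv.swap_apply_right]; exact hG.sym _ _ _ _ hD'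
      rw [Equiv.swap_apply_of_ne_of_ne h3 h4]
      exact hG.rfl' _ _ _
  · simp only [← hcx, Equiv.swap_apply_left]
    rw [← Equiv.eq_symm_apply]
    exact Prod.ext (Fin.ext hy.symm) rfl

theorem cons_of_succ (hG : Good w t D) (hw : 0 < w) {n : ℕ} {e : Equiv.Perm (Fin n)}
    (he : ∀ i j : Fin n, i < j → t (e i) < t (e j)) {i j : Fin n}
    (h : IsSuccIdx (leF t D n w) (AF n w e) i j) : Cons t (e i).1 (e j).1 := by
  obtain ⟨h1, h2, h3⟩ := h
  rw [sbelow_iff hG hw] at h2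
  refine ⟨h2, fun r hr1 hr2 => ?_⟩
  obtain ⟨k, hk⟩ := e.surjective ⟨r, hr2.trans (e j).2⟩
  have hk' : (e k).1 = r := by rw [hk]
  have hik : i < k := by
    rcases lt_trichotomy k i with h | h | h
    · have := h3 k h (by rw [sbelow_iff hG hw]; omega)
      rw [below_iff hG hw] at this
      omega
    · subst h; omega
    · exact h
  rw [← hk']
  exact ⟨he _ _ hik, he _ _ (h1.trans hik)⟩

theorem cons_of_pred (hG : Good w t D) (hw : 0 < w) {n : ℕ} {e : Equiv.Perm (Fin n)}
    (he : ∀ i j : Fin n, i < j → t (e i) < t (e j)) {i j : Fin n}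
    (h : IsPredIdx (leF t D n w) (AF n w e) i j) : Cons t (e j).1 (e i).1 := by
  obtain ⟨h1, h2, h3⟩ := h
  rw [sbelow_iff hG hw] at h2
  refine ⟨h2, fun r hr1 hr2 => ?_⟩
  obtain ⟨k, hk⟩ := e.surjective ⟨r, hr2.trans (e i).2⟩
  have hk' : (e k).1 = r := by rw [hk]
  have hik : i < k := by
    rcases lt_trichotomy k i with h | h | h
    · have := h3 k h (by rw [sbelow_iff hG hw]; omega)
      rw [below_iff hG hw] at this
      omega
    · subst h; omega
    · exact h
  rw [← hk']
  exact ⟨he _ _ (h1.trans hik), he _ _ hik⟩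

theorem exists_succ (hG : Good w t D) (hw : 0 < w) {n : ℕ} {e : Equiv.Perm (Fin n)} {i j : Fin n}
    (hji : j < i) (hl : (e i).1 < (e j).1) :
    ∃ k, IsSuccIdx (leF t D n w) (AF n w e) i k ∧ (e k).1 ≤ (e j).1 := by
  obtain ⟨k, hk, hmin⟩ := Finset.exists_min_image
    (Finset.univ.filter (fun k : Fin n => k < i ∧ (e i).1 < (e k).1)) (fun k => (e k).1)
    ⟨j, by simp [hji]; exact hl⟩
  simp only [Finset.mem_filter, Finset.mem_univ, true_and] at hk hmin
  refine ⟨k, ⟨hk.1, (sbelow_iff hG hw).2 hk.2, ?_⟩, hmin j ⟨hji, hl⟩⟩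
  intro k' h1 h2
  rw [sbelow_iff hG hw] at h2
  rw [below_iff hG hw]
  exact hmin k' ⟨h1, h2⟩

theorem exists_pred (hG : Good w t D) (hw : 0 < w) {n : ℕ} {e : Equiv.Perm (Fin n)} {i j : Fin n}
    (hji : j < i) (hl : (e j).1 < (e i).1) :
    ∃ k, IsPredIdx (leF t D n w) (AF n w e) i k ∧ (e j).1 ≤ (e k).1 := by
  obtain ⟨k, hk, hmin⟩ := Finset.exists_max_image
    (Finset.univ.filter (fun k : Fin n => k < i ∧ (e k).1 < (e i).1)) (fun k => (e k).1)
    ⟨j, by simp [hji]; exact hl⟩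
  simp only [Finset.mem_filter, Finset.mem_univ, true_and] at hk hmin
  refine ⟨k, ⟨hk.1, (sbelow_iff hG hw).2 hk.2, ?_⟩, hmin j ⟨hji, hl⟩⟩
  intro k' h1 h2
  rw [sbelow_iff hG hw] at h2
  rw [below_iff hG hw]
  exact hmin k' ⟨h1, h2⟩

theorem regular (hG : Good w t D) (hw : 0 < w) {n : ℕ} (hn : 0 < n) {e : Equiv.Perm (Fin n)}
    (he : ∀ i j : Fin n, i < j → t (e i) < t (e j)) :
    IsRegularPoset (leF t D n w) w (AF n w e) := by
  have hanti : ∀ i, IsAntichainOn (leF t D n w) (AF n w e i) := by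
    have : ∀ i, ∀ a ∈ AF n w e i, ∀ b ∈ AF n w e i, a ≠ b → ¬ leF t D n w a b := by
      intro i a ha b hb hab hle
      rw [mem_AF] at ha hb
      rcases le_lvl hle with h | h
      · exact hab (co_inj h)
      · omega
    intro i a ha b hb hab
    exact ⟨this i a ha b hb hab, this i b hb a ha hab.symm⟩
  refine ⟨?_, ?_, hanti, fun i => card_AF, ⟨⟨AF n w e ⟨0, hn⟩, hanti _, card_AF⟩, ?_⟩, ?_, ?_, ?_, ?_⟩
  · intro v
    refine ⟨e.symm ⟨_, co_lt1 v⟩, ?_⟩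
    simp [mem_AF]
  · intro i j hij v h1 h2
    rw [mem_AF] at h1 h2
    exact hij (e.injective (Fin.ext (h1.symm.trans h2)))
  · intro S hS
    have hmap : Set.MapsTo (fun v : Fin (n * w) => (co v).2) (S : Set _) (Finset.range w : Set _) := by
      intro v _
      simpa using co_lt2 v
    have hinj : Set.InjOn (fun v : Fin (n * w) => (co v).2) (S : Set _) := by
      intro a ha b hb hab
      by_contra hne
      have := hS a ha b hb hne
      simp only at hab
      rcases le_total (co a).1 (co b).1 with h | h
      · apply this.1
        have h' := le_id hG (co a).2 h
        rw [hab] at h'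
        have e1 : co a = ((co a).1, (co b).2) := by rw [← hab]
        unfold leF
        rw [e1]; exact h'
      · apply this.2
        have h' := le_id hG (co b).2 h
        rw [← hab] at h'
        have e1 : co b = ((co b).1, (co a).2) := by rw [hab]
        unfold leF
        rw [e1]; exact h'
    have := Finset.card_le_card_of_injOn _ hmap hinj
    simpa using this
  · intro i j
    rw [below_iff hG hw, below_iff hG hw]
    exact le_total _ _
  · intro i j h
    exact core_of_cons hG (cons_of_succ hG hw he h)
  · intro i j h
    exact core_of_cons hG (cons_of_pred hG hw he h)
  · intro i j x y hx hy hle hne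
    rw [mem_AF] at hx hy
    have hlv : (e i).1 < (e j).1 := by
      rcases le_lvl hle with h | h
      · exact absurd (co_inj h) hne
      · omega
    constructor
    · intro hji
      obtain ⟨k, hk, hkj⟩ := exists_succ (t := t) (D := D) hG hw hji hlv
      refine ⟨k, hk, ?_⟩
      have hc := cons_of_succ hG hw he hk
      have hc1 := hc.1
      have hki : t (e k).1 < t (e i).1 := he _ _ hk.1
      obtain ⟨c, hc1', hc2'⟩ := le_hit (k := (e k).1) hle (by omega) (by omega) (by
        intro a b h1 h2 h3 h4 hab
        have h5 := (hab.2 _ h2 h3).1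
        rcases h1.eq_or_lt with h6 | h6
        · rw [hx] at h6; rw [← h6] at h5; omega
        · have := (hc.2 a (by omega) h2).1
          omega)
      obtain ⟨z, hz⟩ := co_surj (n := n) (w := w) (e k).2 (le_bd hG hc1' (co_lt2 x))
      simp only at hz
      refine ⟨z, by rw [mem_AF, hz], ?_, ?_, ?_⟩
      · unfold leF; rw [hz]; exact hc1'
      · rintro rfl
        rw [hz] at hx; simp only at hx; omega
      · unfold leF; rw [hz]; exact hc2'
    · intro hij
      obtain ⟨k, hk, hkj⟩ := exists_pred (t := t) (D := D) hG hw hij hlv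
      refine ⟨k, hk, ?_⟩
      have hc := cons_of_pred hG hw he hk
      have hc1 := hc.1
      have hki : t (e k).1 < t (e j).1 := he _ _ hk.1
      obtain ⟨c, hc1', hc2'⟩ := le_hit (k := (e k).1) hle (by omega) (by omega) (by
        intro a b h1 h2 h3 h4 hab
        have h5 := (hab.2 _ h2 h3).2
        rcases h4.eq_or_lt with h6 | h6
        · rw [hy] at h6; rw [h6] at h5; omega
        · have := (hc.2 b h3 (by omega)).2
          omega)
      obtain ⟨z, hz⟩ := co_surj (n := n) (w := w) (e k).2 (le_bd hG hc1' (co_lt2 x))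
      simp only at hz
      refine ⟨z, by rw [mem_AF, hz], ?_, ?_, ?_⟩
      · unfold leF; rw [hz]; exact hc1'
      · unfold leF; rw [hz]; exact hc2'
      · rintro rfl
        rw [hz] at hy; simp only at hy; omega

theorem exists_sort (hG : Good w t D) (n : ℕ) :
    ∃ e : Equiv.Perm (Fin n), ∀ i j : Fin n, i < j → t (e i) < t (e j) := by
  refine ⟨Tuple.sort (fun i : Fin n => t i.1), fun i j hij => ?_⟩
  have := Tuple.monotone_sort (fun i : Fin n => t i.1) hij.le
  refine lt_of_le_of_ne this ?_
  intro h
  have := (Tuple.sort (fun i : Fin n => t i.1)).injective (Fin.ext (hG.inj _ _ h))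
  omega

theorem partial_order (n : ℕ) : IsPartialOrder (Fin (n * w)) (leF t D n w) where
  refl _ := Relation.ReflTransGen.refl
  trans _ _ _ h1 h2 := Relation.ReflTransGen.trans h1 h2
  antisymm _ _ h1 h2 := co_inj (le_antisymm' h1 h2)

end Lad

namespace Lad

theorem blk {w u v r r' : ℕ} (h : 2 * w * u + r = 2 * w * v + r') (hr : r < 2 * w)
    (hr' : r' < 2 * w) : u = v ∧ r = r' := by
  have hw : 0 < 2 * w := by omega
  have h1 : (2 * w * u + r) / (2 * w) = u := by
    rw [Nat.mul_add_div hw, Nat.div_eq_of_lt hr]; simp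
  have h2 : (2 * w * v + r') / (2 * w) = v := by
    rw [Nat.mul_add_div hw, Nat.div_eq_of_lt hr']; simp
  have : u = v := by rw [← h1, h, h2]
  subst this
  exact ⟨rfl, by omega⟩

theorem blk_ge {w u : ℕ} (hu : 1 ≤ u) : 2 * w ≤ 2 * w * u := Nat.le_mul_of_pos_right _ hu

theorem blk_ex {w : ℕ} (hw : 0 < w) (p : ℕ) :
    p < 2 * w ∨ ∃ u r, 1 ≤ u ∧ r < 2 * w ∧ p = 2 * w * u + r := by
  by_cases h : p < 2 * w
  · exact Or.inl h
  · right
    refine ⟨p / (2 * w), p % (2 * w), ?_, Nat.mod_lt _ (by omega), (Nat.div_add_mod _ _).symm⟩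
    exact (Nat.one_le_div_iff (by omega)).2 (by omega)

/-- presentation time of a level -/
def tau (w p : ℕ) : ℕ :=
  if p < w then 2 * p else if p < 2 * w then 2 * (4 * w - p) + 1
  else if 0 < p % (2 * w) ∧ p % (2 * w) < w then 2 * (p + w) + 1 else 2 * p

theorem tau_x {w p : ℕ} (h : p < w) : tau w p = 2 * p := by simp [tau, h]
theorem tau_b {w p : ℕ} (h : w ≤ p) (h' : p < 2 * w) : tau w p = 2 * (4 * w - p) + 1 := by
  simp [tau, h', not_lt.2 h]
theorem tau_a {w u r : ℕ} (hu : 1 ≤ u) (h : 0 < r) (h' : r < w) :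
    tau w (2 * w * u + r) = 2 * (2 * w * u + r + w) + 1 := by
  have := blk_ge (w := w) hu
  have e : (2 * w * u + r) % (2 * w) = r := by
    rw [Nat.mul_add_mod]; exact Nat.mod_eq_of_lt (by omega)
  unfold tau
  rw [if_neg (by omega), if_neg (by omega), e, if_pos ⟨h, h'⟩]
theorem tau_s {w u r : ℕ} (hu : 1 ≤ u) (h : r = 0 ∨ w ≤ r) (h' : r < 2 * w) :
    tau w (2 * w * u + r) = 2 * (2 * w * u + r) := by
  have := blk_ge (w := w) hu
  have e : (2 * w * u + r) % (2 * w) = r := by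
    rw [Nat.mul_add_mod]; exact Nat.mod_eq_of_lt (by omega)
  unfold tau
  rw [if_neg (by omega), if_neg (by omega), e, if_neg (by omega)]
theorem tau_ge (w p : ℕ) : 2 * p ≤ tau w p := by
  unfold tau
  split_ifs <;> omega

theorem tau_inj {w : ℕ} (p q : ℕ) (h : tau w p = tau w q) : p = q := by
  have h1 : 0 < p % (2 * w) → p ≠ 2 * w := by
    rintro h rfl; simp at h
  have h2 : 0 < q % (2 * w) → q ≠ 2 * w := by
    rintro h rfl; simp at h
  unfold tau at h
  generalize p % (2 * w) = a at *
  generalize q % (2 * w) = b at *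
  split_ifs at h <;> omega

theorem cons_succ {t : ℕ → ℕ} (p : ℕ) : Cons t p (p + 1) :=
  ⟨by omega, fun r h1 h2 => by omega⟩

theorem cons_b {w q : ℕ} (hw : 0 < w) (h1 : w ≤ q) (h2 : q ≤ 2 * w) :
    Cons (tau w) (w - 1) q := by
  refine ⟨by omega, fun r hr1 hr2 => ?_⟩
  rw [tau_x (by omega : w - 1 < w), tau_b (by omega : w ≤ r) (by omega)]
  refine ⟨by omega, ?_⟩
  rcases h2.eq_or_lt with h | h
  · have := tau_s (w := w) (u := 1) (r := 0) le_rfl (Or.inl rfl) (by omega)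
    simp at this
    rw [h, this]; omega
  · rw [tau_b h1 h]; omega

theorem cons_a {w u r : ℕ} (hu : 1 ≤ u) (hr : r < w) :
    Cons (tau w) (2 * w * u + r) (2 * w * u + w) := by
  refine ⟨by omega, fun k h1 h2 => ?_⟩
  obtain ⟨s, rfl⟩ : ∃ s, k = 2 * w * u + s := ⟨k - 2 * w * u, by omega⟩
  rw [tau_a hu (by omega : 0 < s) (by omega), tau_s hu (Or.inr le_rfl) (by omega : w < 2 * w)]
  refine ⟨?_, by omega⟩
  rcases Nat.eq_zero_or_pos r with h | h
  · rw [tau_s hu (Or.inl h) (by omega)]; omega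
  · rw [tau_a hu h (by omega)]; omega

theorem cons_cases {w p q : ℕ} (hw : 0 < w) (h : Cons (tau w) p q) :
    q = p + 1 ∨ (p + 1 = w ∧ w ≤ q ∧ q ≤ 2 * w) ∨
      ∃ u r, 1 ≤ u ∧ r < w ∧ p = 2 * w * u + r ∧ q = 2 * w * u + w := by
  by_cases hq : q = p + 1
  · exact Or.inl hq
  right
  obtain ⟨hpq, h⟩ := h
  have hge := tau_ge w q
  have key : ∀ k, p < k → k < q → tau w k ≠ 2 * k := by
    intro k h1 h2 h3
    have := (h k h1 h2).2
    omega
  have h1 := h (p + 1) (by omega) (by omega)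
  have k1 := key (p + 1) (by omega) (by omega)
  rcases blk_ex hw p with hp | ⟨u, r, hu, hr, rfl⟩
  · left
    have hx : ¬ p + 1 < w := fun h => k1 (tau_x h)
    have k2 : q ≤ 2 * w ∨ 2 * w ≤ p := by
      by_contra hcon
      refine key (2 * w) (by omega) (by omega) ?_
      have := tau_s (w := w) (u := 1) (r := 0) le_rfl (Or.inl rfl) (by omega)
      simpa using this
    have : ¬ w ≤ p := by
      intro hwp
      rw [tau_b hwp (by omega), tau_b (by omega : w ≤ p + 1) (by omega)] at h1
      omega
    omega
  · right
    have hrw : r + 1 < w := by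
      by_contra hcon
      by_cases hr2 : r + 1 < 2 * w
      · exact k1 (tau_s (r := r + 1) hu (by omega) hr2)
      · have e : 2 * w * u + r + 1 = 2 * w * (u + 1) + 0 := by rw [Nat.mul_add]; omega
        rw [e] at k1
        exact k1 (tau_s (by omega) (Or.inl rfl) (by omega))
    refine ⟨u, r, hu, by omega, rfl, ?_⟩
    have hq1 : ¬ 2 * w * u + w < q := by
      intro hcon
      exact key (2 * w * u + w) (by omega) hcon (tau_s hu (Or.inr le_rfl) (by omega))
    have hq2 : ¬ q < 2 * w * u + w := by
      intro hcon
      obtain ⟨s, rfl⟩ : ∃ s, q = 2 * w * u + s := ⟨q - 2 * w * u, by omega⟩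
      have e1 := tau_a (w := w) (r := r + 1) hu (by omega) (by omega)
      rw [← add_assoc] at e1
      rw [e1, tau_a (w := w) (r := s) hu (by omega) (by omega)] at h1
      omega
    omega

/-- the star edges: first the centre, then the leaf -/
def S (w p q c c' : ℕ) : Prop :=
  (q = p + 1 ∧ q < w ∧ c = 1 ∧ ((p = 0 ∧ c' = 0) ∨ (0 < p ∧ c' + p = w))) ∨
  (p + 1 = w ∧ w ≤ q ∧ q ≤ 2 * w ∧ c = 0 ∧ 2 * w ≤ c' + q) ∨
  (∃ u r, 1 ≤ u ∧ r < w ∧ p = 2 * w * u + r ∧ q = 2 * w * u + w ∧ c = u ∧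
    ((r ≤ c' ∧ c' < u) ∨ c' = u + 1)) ∨
  (∃ u s, 1 ≤ u ∧ 1 ≤ s ∧ s < w ∧ s ≤ u ∧ p + 1 = 2 * w * u + w + s ∧ q = p + 1 ∧ c = 0 ∧ c' = s)

def DD (w p q c c' : ℕ) : Prop :=
  c = c' ∨ (c < w ∧ c' < w ∧ (S w p q c c' ∨ S w p q c' c))

theorem S_lo {w p q c c' : ℕ} (hp : p < 2 * w) (h : S w p q c c') :
    (q = p + 1 ∧ q < w ∧ c = 1 ∧ ((p = 0 ∧ c' = 0) ∨ (0 < p ∧ c' + p = w))) ∨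
    (p + 1 = w ∧ w ≤ q ∧ q ≤ 2 * w ∧ c = 0 ∧ 2 * w ≤ c' + q) := by
  rcases h with h | h | ⟨u, r, hu, h⟩ | ⟨u, r, hu, h⟩
  · exact Or.inl h
  · exact Or.inr h
  · have := blk_ge (w := w) hu; omega
  · have := blk_ge (w := w) hu; omega

theorem S_hi {w u r q c c' : ℕ} (hu : 1 ≤ u) (hr : r < 2 * w) (h : S w (2 * w * u + r) q c c') :
    (r < w ∧ q = 2 * w * u + w ∧ c = u ∧ ((r ≤ c' ∧ c' < u) ∨ c' = u + 1)) ∨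
    (w ≤ r ∧ r + 1 < 2 * w ∧ q = 2 * w * u + r + 1 ∧ c = 0 ∧ c' + w = r + 1 ∧ 1 ≤ c' ∧ c' ≤ u) := by
  have := blk_ge (w := w) hu
  rcases h with h | h | ⟨v, s, hv, hs, h1, h2⟩ | ⟨v, s, hv, hs, hs', hs2, h1, h2⟩
  · omega
  · omega
  · obtain ⟨rfl, rfl⟩ := blk h1 hr (by omega)
    exact Or.inl ⟨hs, h2⟩
  · obtain ⟨rfl, rfl⟩ := blk (w := w) (u := u) (v := v) (r := r) (r' := w + s - 1) (by omega) hr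
      (by omega)
    right; omega

theorem good {w : ℕ} (hw : 2 ≤ w) : Good w (tau w) (DD w) where
  rfl' _ _ _ := Or.inl rfl
  sym p q c c' h := by
    rcases h with h | ⟨h1, h2, h3⟩
    · exact Or.inl h.symm
    · exact Or.inr ⟨h2, h1, h3.symm⟩
  bd p q c c' h := by
    rcases h with h | ⟨h1, h2, h3⟩
    · exact Or.inl h
    · exact Or.inr ⟨h1, h2⟩
  inj := tau_inj
  comp := by
    intro p a q c d c' hpa haq hpq h1 h2
    have l1 := hpa.1
    have l2 := haq.1
    rcases cons_cases (by omega) hpq with h | ⟨hp, hq1, hq2⟩ | ⟨u, r, hu, hr, rfl, rfl⟩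
    · omega
    · have hS : ∀ x y, ¬ S w a q x y := by
        intro x y h
        have := S_lo (by omega) h
        omega
      have e : d = c' := by
        rcases h2 with h2 | ⟨-, -, h2 | h2⟩
        · exact h2
        · exact absurd h2 (hS _ _)
        · exact absurd h2 (hS _ _)
      subst e
      have hm : ∀ x y, S w p a x y → S w p q x y := by
        intro x y h
        have := S_lo (by omega) h
        right; left; omega
      rcases h1 with h1 | ⟨g1, g2, h1⟩
      · exact Or.inl h1
      · exact Or.inr ⟨g1, g2, h1.imp (hm _ _) (hm _ _)⟩
    · obtain ⟨s, rfl⟩ : ∃ s, a = 2 * w * u + s := ⟨a - 2 * w * u, by omega⟩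
      have hS : ∀ x y, ¬ S w (2 * w * u + r) (2 * w * u + s) x y := by
        intro x y h
        have := S_hi hu (by omega) h
        omega
      have e : c = d := by
        rcases h1 with h2 | ⟨-, -, h2 | h2⟩
        · exact h2
        · exact absurd h2 (hS _ _)
        · exact absurd h2 (hS _ _)
      subst e
      have hm : ∀ x y, S w (2 * w * u + s) (2 * w * u + w) x y →
          S w (2 * w * u + r) (2 * w * u + w) x y := by
        intro x y h
        have := S_hi hu (by omega) h
        right; right; left
        exact ⟨u, r, hu, hr, rfl, rfl, by omega, by omega⟩
      rcases h2 with h1 | ⟨g1, g2, h1⟩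
      · exact Or.inl h1
      · exact Or.inr ⟨g1, g2, h1.imp (hm _ _) (hm _ _)⟩

/-- edges from low levels -/
theorem edge_lo {w p q c c' : ℕ} (hw : 2 ≤ w) (hp : p < 2 * w)
    (h : Edge (tau w) (DD w) (p, c) (q, c')) :
    (c = c' ∧ (q = p + 1 ∨ (p + 1 = w ∧ w ≤ q ∧ q ≤ 2 * w))) ∨
    (c < w ∧ c' < w ∧ q = p + 1 ∧ q < w ∧
      ((c = 1 ∧ ((p = 0 ∧ c' = 0) ∨ (0 < p ∧ c' + p = w))) ∨
       (c' = 1 ∧ ((p = 0 ∧ c = 0) ∨ (0 < p ∧ c + p = w))))) ∨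
    (c < w ∧ c' < w ∧ p + 1 = w ∧ w ≤ q ∧ q ≤ 2 * w ∧
      ((c = 0 ∧ 2 * w ≤ c' + q) ∨ (c' = 0 ∧ 2 * w ≤ c + q))) := by
  obtain ⟨hc, hd⟩ := h
  simp only at hc hd
  rcases hd with hd | ⟨g1, g2, hd | hd⟩
  · left
    refine ⟨hd, ?_⟩
    rcases cons_cases (by omega) hc with h | h | ⟨u, r, hu, h⟩
    · exact Or.inl h
    · exact Or.inr h
    · have := blk_ge (w := w) hu; omega
  · have := S_lo hp hd
    omega
  · have := S_lo hp hd
    omega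

theorem edge_hi {w u r q c c' : ℕ} (hw : 2 ≤ w) (hu : 1 ≤ u) (hr : r < 2 * w)
    (h : Edge (tau w) (DD w) (2 * w * u + r, c) (q, c')) :
    (c = c' ∧ (q = 2 * w * u + r + 1 ∨ (r < w ∧ q = 2 * w * u + w))) ∨
    (r < w ∧ q = 2 * w * u + w ∧
      ((c = u ∧ ((r ≤ c' ∧ c' < u) ∨ c' = u + 1)) ∨ (c' = u ∧ ((r ≤ c ∧ c < u) ∨ c = u + 1)))) ∨
    (w ≤ r ∧ r + 1 < 2 * w ∧ q = 2 * w * u + r + 1 ∧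
      ((c = 0 ∧ c' + w = r + 1 ∧ 1 ≤ c' ∧ c' ≤ u) ∨ (c' = 0 ∧ c + w = r + 1 ∧ 1 ≤ c ∧ c ≤ u))) := by
  have := blk_ge (w := w) hu
  obtain ⟨hc, hd⟩ := h
  simp only at hc hd
  rcases hd with hd | ⟨g1, g2, hd | hd⟩
  · left
    refine ⟨hd, ?_⟩
    rcases cons_cases (by omega) hc with h | h | ⟨v, s, hv, hs, h1, h2⟩
    · exact Or.inl h
    · omega
    · obtain ⟨rfl, rfl⟩ := blk h1 hr (by omega)
      right; omega
  · rcases S_hi hu hr hd with ⟨h1, h2, h3⟩ | ⟨h1, h2, h3, h4⟩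
    · exact Or.inr (Or.inl ⟨h1, h2, Or.inl h3⟩)
    · exact Or.inr (Or.inr ⟨h1, h2, h3, Or.inl h4⟩)
  · rcases S_hi hu hr hd with ⟨h1, h2, h3⟩ | ⟨h1, h2, h3, h4⟩
    · exact Or.inr (Or.inl ⟨h1, h2, Or.inr h3⟩)
    · exact Or.inr (Or.inr ⟨h1, h2, h3, Or.inr h4⟩)

abbrev L (w : ℕ) : ℕ × ℕ → ℕ × ℕ → Prop := Le (tau w) (DD w)

/-- the up-set separating the legs -/
def U (w : ℕ) (v : ℕ × ℕ) : Prop :=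
  (v.1 < 2 * w → w ≤ v.1 ∧ v.2 = 0) ∧
  ∀ u r, 1 ≤ u → r < 2 * w → v.1 = 2 * w * u + r → v.2 ≤ u ∧ (r < w → v.2 < u)

theorem U_closed {w : ℕ} (hw : 2 ≤ w) (v v' : ℕ × ℕ) (h : Edge (tau w) (DD w) v v')
    (hv : U w v) : U w v' := by
  obtain ⟨p, c⟩ := v
  obtain ⟨q, c'⟩ := v'
  simp only [U] at hv ⊢
  have hpq := h.1.1
  simp only at hpq
  rcases blk_ex (w := w) (by omega) p with hp | ⟨u, r, hu, hr, rfl⟩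
  · have e := edge_lo hw hp h
    have h1 := hv.1 hp
    refine ⟨by omega, ?_⟩
    intro v s hv hs hq
    have := blk_ge (w := w) hv
    omega
  · have e := edge_hi hw hu hr h
    have h1 := hv.2 u r hu hr rfl
    have := blk_ge (w := w) hu
    refine ⟨by omega, ?_⟩
    intro v s hv hs hq
    by_cases hlast : r + 1 < 2 * w
    · obtain ⟨s', hs'1, hs'2⟩ : ∃ s', s' < 2 * w ∧ q = 2 * w * u + s' :=
        ⟨q - 2 * w * u, by omega, by omega⟩
      obtain ⟨rfl, rfl⟩ := blk (hs'2.symm.trans hq) hs'1 hs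
      omega
    · have e2 : q = 2 * w * (u + 1) + 0 := by rw [Nat.mul_add]; omega
      obtain ⟨rfl, rfl⟩ := blk (e2.symm.trans hq) (by omega) hs
      omega

theorem not_le_of_U {w : ℕ} (hw : 2 ≤ w) {v v' : ℕ × ℕ} (h : U w v) (h' : ¬ U w v') :
    ¬ L w v v' := fun hle => h' (le_closed (U w) (U_closed hw) hle h)

/-- phase zero incomparability -/
theorem phase0_not {w i j : ℕ} (hw : 2 ≤ w) (hij : i < j) (hj : j < w) :
    ¬ L w (j, 1) (w + i, 0) := by
  intro h
  have := le_closed (fun v => w + i < v.1 ∨ (1 ≤ v.2 ∧ v.2 + i < w ∧ i < v.1)) ?_ h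
    (by right; simp; omega)
  · simp at this
  · rintro ⟨p, c⟩ ⟨q, c'⟩ he hv
    have hpq := he.1.1
    simp only at hv hpq ⊢
    by_cases hp : p < 2 * w
    · have := edge_lo hw hp he
      omega
    · omega

theorem phase_not {w u i j : ℕ} (hw : 2 ≤ w) (hu : 1 ≤ u) (huw : u < w) (hij : i < j) (hj : j ≤ u) :
    ¬ L w (2 * w * u + j, u) (2 * w * u + w + i, 0) := by
  intro h
  have := le_closed (fun v => 2 * w * u + w + i < v.1 ∨
    (2 * w * u + i < v.1 ∧ v.1 < 2 * w * u + w ∧ v.2 = u) ∨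
    (2 * w * u + w ≤ v.1 ∧ i < v.2)) ?_ h
    (by right; left; simp; omega)
  · simp at this
  · rintro ⟨p, c⟩ ⟨q, c'⟩ he hv
    have hpq := he.1.1
    simp only at hv hpq ⊢
    by_cases hp : 2 * w * u + w + i < p
    · omega
    · obtain ⟨s, rfl⟩ : ∃ s, p = 2 * w * u + s := ⟨p - 2 * w * u, by omega⟩
      have := edge_hi hw hu (by omega) he
      omega

theorem phase0_le {w i : ℕ} (hw : 2 ≤ w) (hi : i < w) : L w (i, 1) (w + i, 0) := by
  have hG := good hw
  have hlast : ∀ c, c < w → w ≤ c + i → L w (w - 1, c) (w + i, 0) := by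
    intro c hc hci
    refine le_edge (cons_b (by omega) (by omega) (by omega)) (Or.inr ⟨hc, by omega, Or.inr ?_⟩)
    right; left; omega
  rcases Nat.eq_zero_or_pos i with rfl | h0
  · refine (le_edge (q := 1) (c' := 0) (cons_succ 0) (Or.inr ⟨by omega, by omega, Or.inl ?_⟩)).trans
      (le_id hG 0 (by omega))
    by_cases h2 : 1 < w
    · left; omega
    · omega
  · by_cases h1 : i + 1 < w
    · refine Relation.ReflTransGen.trans (le_edge (q := i + 1) (c' := w - i) (cons_succ i)
        (Or.inr ⟨by omega, by omega, Or.inl ?_⟩)) ?_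
      · left; omega
      · exact Relation.ReflTransGen.trans (le_id hG _ (by omega)) (hlast (w - i) (by omega) (by omega))
    · have : i = w - 1 := by omega
      rw [this] at hlast ⊢
      exact hlast 1 (by omega) (by omega)

theorem phase_le {w u i : ℕ} (hw : 2 ≤ w) (hu : 1 ≤ u) (huw : u < w) (hi : i ≤ u) :
    L w (2 * w * u + i, u) (2 * w * u + w + i, 0) := by
  have hG := good hw
  have h1 : L w (2 * w * u + i, u) (2 * w * u + w, i) := by
    rcases hi.eq_or_lt with rfl | h
    · exact le_id hG _ (by omega)
    · refine le_edge (cons_a hu (by omega)) (Or.inr ⟨by omega, by omega, Or.inl ?_⟩)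
      right; right; left
      exact ⟨u, i, hu, by omega, rfl, rfl, rfl, by omega⟩
  refine Relation.ReflTransGen.trans h1 ?_
  rcases Nat.eq_zero_or_pos i with rfl | h0
  · exact Relation.ReflTransGen.refl
  · refine Relation.ReflTransGen.trans (le_id hG (q := 2 * w * u + w + (i - 1)) i (by omega)) ?_
    have e : 2 * w * u + w + i = 2 * w * u + w + (i - 1) + 1 := by omega
    rw [e]
    refine le_edge (cons_succ _) (Or.inr ⟨by omega, by omega, Or.inr ?_⟩)
    right; right; right
    exact ⟨u, i, hu, h0, by omega, hi, by omega, rfl, rfl, rfl⟩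

def Rel (w : ℕ) (a b : (ℕ × ℕ) × (ℕ × ℕ)) : Prop :=
  (L w a.1 b.1 ∧ a.1 ≠ b.1) ∧ (L w a.2 b.2 ∧ a.2 ≠ b.2) ∧ ¬ L w a.2 b.1 ∧ ¬ L w b.1 a.2

def Inv (w u : ℕ) (l : List ((ℕ × ℕ) × (ℕ × ℕ))) : Prop :=
  l.Pairwise (Rel w) ∧ ∀ a ∈ l, (L w a.1 a.2 ∧ a.1 ≠ a.2) ∧ a.1.2 < w ∧ a.2.2 < w ∧
    a.1.1 < 2 * w * u ∧ a.2.1 < 2 * w * u ∧ U w a.2 ∧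
    L w a.2 (2 * w * u, 0) ∧ (u < w → L w a.1 (2 * w * u, u))

theorem inv_one {w : ℕ} (hw : 2 ≤ w) :
    ∃ l, Inv w 1 l ∧ l.length = w := by
  have hG := good hw
  refine ⟨(List.range w).map (fun i => ((i, 1), (w + i, 0))), ⟨?_, ?_⟩, by simp⟩
  · rw [List.pairwise_map]
    refine List.Pairwise.imp_of_mem ?_ (List.pairwise_lt_range (n := w))
    intro i j hi hj hij
    simp at hi hj
    refine ⟨⟨le_id hG _ hij.le, by simp; omega⟩, ⟨le_id hG _ (by omega), by simp; omega⟩, ?_, ?_⟩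
    · intro h
      have := le_lvl' h
      simp at this; omega
    · exact phase0_not hw hij hj
  · intro a ha
    simp only [List.mem_map, List.mem_range] at ha
    obtain ⟨i, hi, rfl⟩ := ha
    refine ⟨⟨phase0_le hw hi, by simp⟩, by simp; omega, by simp; omega, by simp; omega, by simp; omega,
      ?_, ?_, ?_⟩
    · refine ⟨fun _ => by simp, ?_⟩
      intro u r hu hr h
      have := blk_ge (w := w) hu
      simp at h; omega
    · exact le_id hG _ (by omega)
    · intro _
      exact le_id hG _ (by omega)

theorem inv_step {w u : ℕ} (hw : 2 ≤ w) (hu : 1 ≤ u) (huw : u < w)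
    {l : List ((ℕ × ℕ) × (ℕ × ℕ))} (hl : Inv w u l) :
    ∃ l', Inv w (u + 1) l' ∧ l'.length = l.length + (u + 1) := by
  have hG := good hw
  have hstep : 2 * w * (u + 1) = 2 * w * u + 2 * w := by ring
  have hge := blk_ge (w := w) hu
  have hUn : ∀ i ≤ u, ¬ U w (2 * w * u + i, u) := by
    intro i hi hU
    have := hU.2 u i hu (by omega) rfl
    simp at this; omega
  refine ⟨l ++ (List.range (u + 1)).map (fun i => ((2 * w * u + i, u), (2 * w * u + w + i, 0))),
    ⟨?_, ?_⟩, by simp⟩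
  · rw [List.pairwise_append]
    refine ⟨hl.1, ?_, ?_⟩
    · rw [List.pairwise_map]
      refine List.Pairwise.imp_of_mem ?_ (List.pairwise_lt_range (n := u + 1))
      intro i j hi hj hij
      simp at hi hj
      refine ⟨⟨le_id hG _ (by omega), by simp; omega⟩, ⟨le_id hG _ (by omega), by simp; omega⟩, ?_, ?_⟩
      · intro h
        have := le_lvl' h
        simp at this; omega
      · exact phase_not hw hu huw hij (by omega)
    · intro a ha b hb
      simp only [List.mem_map, List.mem_range] at hb
      obtain ⟨i, hi, rfl⟩ := hb
      obtain ⟨-, -, -, h1, h2, h3, h4, h5⟩ := hl.2 a ha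
      refine ⟨⟨(h5 huw).trans (le_id hG _ (by omega)), ?_⟩,
        ⟨h4.trans (le_id hG _ (by omega)), ?_⟩, ?_, ?_⟩
      · intro h; rw [h] at h1; simp at h1
      · intro h; rw [h] at h2; simp at h2; omega
      · exact not_le_of_U hw h3 (hUn i (by omega))
      · intro h
        have := le_lvl' h
        simp at this; omega
  · intro a ha
    rw [List.mem_append] at ha
    rcases ha with ha | ha
    · obtain ⟨h0, c1, c2, h1, h2, h3, h4, h5⟩ := hl.2 a ha
      refine ⟨h0, c1, c2, by omega, by omega, h3, h4.trans (le_id hG _ (by omega)), ?_⟩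
      intro hlt
      refine (h5 huw).trans (Relation.ReflTransGen.trans
        (le_edge (q := 2 * w * u + w) (c' := u + 1) (cons_a (r := 0) hu (by omega))
          (Or.inr ⟨huw, hlt, Or.inl ?_⟩)) (le_id hG _ (by omega)))
      right; right; left
      exact ⟨u, 0, hu, by omega, rfl, rfl, rfl, Or.inr rfl⟩
    · simp only [List.mem_map, List.mem_range] at ha
      obtain ⟨i, hi, rfl⟩ := ha
      refine ⟨⟨phase_le hw hu huw (by omega), by simp; omega⟩, huw, by simp; omega,
        by simp; omega, by simp; omega, ?_, le_id hG _ (by omega), ?_⟩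
      · refine ⟨fun h => by simp at h; omega, ?_⟩
        intro v r hv hr h
        simp only at h ⊢
        obtain ⟨rfl, rfl⟩ := blk (u := u) (r := w + i) ((add_assoc _ _ _).symm.trans h) (by omega) hr
        omega
      · intro hlt
        refine Relation.ReflTransGen.trans
          (le_edge (q := 2 * w * u + w) (c' := u + 1) (cons_a (r := i) hu (by omega))
            (Or.inr ⟨huw, hlt, Or.inl ?_⟩)) (le_id hG _ (by omega))
        right; right; left
        exact ⟨u, i, hu, by omega, rfl, rfl, rfl, Or.inr rfl⟩

theorem inv_all {w : ℕ} (hw : 2 ≤ w) (u : ℕ) (hu : 1 ≤ u) (huw : u ≤ w) :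
    ∃ l, Inv w u l ∧ 2 * l.length + 2 = 2 * w + u * (u + 1) := by
  induction u, hu using Nat.le_induction with
  | base =>
    obtain ⟨l, h1, h2⟩ := inv_one hw
    exact ⟨l, h1, by omega⟩
  | succ u hu ih =>
    obtain ⟨l, h1, h2⟩ := ih (by omega)
    obtain ⟨l', h3, h4⟩ := inv_step hw hu (by omega) h1
    refine ⟨l', h3, ?_⟩
    rw [h4]
    nlinarith

theorem main (w : ℕ) (hw : 2 ≤ w) :
    ∃ (N n : ℕ) (le : Fin N → Fin N → Prop) (A : Fin n → Finset (Fin N))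
      (x y : Fin (w * ((w + 2) / 2)) → Fin N),
      IsPartialOrder (Fin N) le ∧ IsRegularPoset le w A ∧
      IsLadderIn le x y := by
  have hG := good hw
  obtain ⟨l, hl, hlen⟩ := inv_all hw w (by omega) le_rfl
  have hm : w * ((w + 2) / 2) ≤ l.length := by
    have h1 : 2 * ((w + 2) / 2) ≤ w + 2 := by omega
    have h2 : w * (2 * ((w + 2) / 2)) ≤ w * (w + 2) := Nat.mul_le_mul_left _ h1
    nlinarith
  obtain ⟨e, he⟩ := exists_sort hG (2 * w * w)
  have hel : ∀ i : Fin (w * ((w + 2) / 2)), ∃ a b : Fin (2 * w * w * w),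
      co a = (l[i.1]'(lt_of_lt_of_le i.2 hm)).1 ∧ co b = (l[i.1]'(lt_of_lt_of_le i.2 hm)).2 := by
    intro i
    obtain ⟨-, c1, c2, h1, h2, -⟩ := hl.2 _ (List.getElem_mem (lt_of_lt_of_le i.2 hm))
    obtain ⟨a, ha⟩ := co_surj (w := w) h1 c1
    obtain ⟨b, hb⟩ := co_surj (w := w) h2 c2
    exact ⟨a, b, ha, hb⟩
  choose x y hx hy using hel
  have hpw : ∀ i j : Fin (w * ((w + 2) / 2)), i < j →
      Rel w (l[i.1]'(lt_of_lt_of_le i.2 hm)) (l[j.1]'(lt_of_lt_of_le j.2 hm)) := by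
    intro i j hij
    exact List.pairwise_iff_getElem.1 hl.1 _ _ _ _ hij
  refine ⟨2 * w * w * w, 2 * w * w, leF (tau w) (DD w) (2 * w * w) w, AF (2 * w * w) w e, x, y,
    partial_order _, regular hG (by omega) (by positivity) he, ?_, ?_, ?_, ?_⟩
  · intro i j hij
    obtain ⟨⟨h1, h2⟩, -⟩ := hpw i j hij
    rw [← hx, ← hx] at h1 h2
    exact ⟨h1, fun h => h2 (by rw [h])⟩
  · intro i j hij
    obtain ⟨-, ⟨h1, h2⟩, -⟩ := hpw i j hij
    rw [← hy, ← hy] at h1 h2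
    exact ⟨h1, fun h => h2 (by rw [h])⟩
  · intro i
    obtain ⟨⟨h1, h2⟩, -⟩ := hl.2 _ (List.getElem_mem (lt_of_lt_of_le i.2 hm))
    rw [← hx, ← hy] at h1 h2
    exact ⟨h1, fun h => h2 (by rw [h])⟩
  · intro i j hij
    obtain ⟨-, -, h1, h2⟩ := hpw i j hij
    rw [← hx, ← hy] at h1 h2
    exact ⟨h1, h2⟩

end Lad

/-- for each `w ≥ 2` there is a regular poset of width `w`
containing an induced copy of the ladder `L_{w·⌊(w+2)/2⌋}`. -/
theorem stmt_14 (w : ℕ) (hw : 2 ≤ w) :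
    ∃ (N n : ℕ) (le : Fin N → Fin N → Prop) (A : Fin n → Finset (Fin N))
      (x y : Fin (w * ((w + 2) / 2)) → Fin N),
      IsPartialOrder (Fin N) le ∧ IsRegularPoset le w A ∧
      IsLadderIn le x y := by
  exact Lad.main w hw
end

section
/- For all positive integers m and w with m > 1, there exists a finite L_m-free poset of width w admitting an n-Grundy coloring with n ≥ w^{lg(m−1)}/(m−1), where lg denotes the base-2 logarithm. Equivalently, First-Fit can be forced to use at least w^{lg(m−1)}/(m−1) chains on some L_m-free on-line poset of width w. -/
/-- The half-graph core of a ladder: `b i` is incomparable to `a j` iff `i ≤ j`. -/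
def HalfIn {α : Type} (le : α → α → Prop) {k : ℕ} (a b : Fin k → α) : Prop :=
  (∀ i j : Fin k, i < j → le (a i) (a j) ∧ a i ≠ a j) ∧
  (∀ i j : Fin k, i < j → le (b i) (b j) ∧ b i ≠ b j) ∧
  (∀ i j : Fin k, i ≤ j → ¬ le (b i) (a j) ∧ ¬ le (a j) (b i)) ∧
  (∀ i j : Fin k, i < j → le (a i) (b j) ∧ a i ≠ b j)

/-- A poset with all the properties preserved by lexicographic products. -/
structure GoodP (k n w : ℕ) (α : Type) (le : α → α → Prop) (f g : α → ℕ) : Prop where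
  refl : ∀ a, le a a
  trans : ∀ a b c, le a b → le b c → le a c
  antisymm : ∀ a b, le a b → le b a → a = b
  flt : ∀ a, f a < w
  fch : ∀ a b, f a = f b → le a b ∨ le b a
  glt : ∀ a, g a < n
  gsurj : ∀ i, i < n → ∃ a, g a = i
  gch : ∀ a b, g a = g b → le a b ∨ le b a
  gwit : ∀ a i, i < g a → ∃ b, (¬ le b a ∧ ¬ le a b) ∧ g b = i
  free : ∀ a b : Fin k → α, ¬ HalfIn le a b

/-- The width two building block. -/
abbrev BaseT (n : ℕ) : Type := {p : Fin n × Fin n // p.1.val + p.2.val < n}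

def baseLe (n : ℕ) (p q : BaseT n) : Prop :=
  p.1.1.val + 2 ≤ q.1.1.val ∨ (p.1.1.val ≤ q.1.1.val ∧ p.1.2.val ≤ q.1.2.val)

theorem good_base (n : ℕ) (hpos : 0 < n) :
    GoodP n n 2 (BaseT n) (baseLe n) (fun p => p.1.1.val % 2) (fun p => p.1.2.val) where
  refl a := by unfold baseLe; omega
  trans a b c := by unfold baseLe; omega
  antisymm a b h1 h2 := by
    unfold baseLe at h1 h2
    apply Subtype.ext
    apply Prod.ext <;> apply Fin.ext <;> omega
  flt a := Nat.mod_lt _ (by norm_num)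
  fch a b h := by
    have h : a.1.1.val % 2 = b.1.1.val % 2 := h
    unfold baseLe; omega
  glt a := a.1.2.isLt
  gsurj i hi := ⟨⟨(⟨0, by omega⟩, ⟨i, hi⟩), by simpa using hi⟩, rfl⟩
  gch a b h := by
    have h : a.1.2.val = b.1.2.val := h
    unfold baseLe; omega
  gwit a i hi := by
    have h := a.2
    refine ⟨⟨(⟨a.1.1.val + 1, by omega⟩, ⟨i, by omega⟩), by dsimp only; omega⟩, ?_, rfl⟩
    unfold baseLe
    dsimp only
    omega
  free a b h := by
    obtain ⟨ha, hb, hinc, hlt⟩ := h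
    · have hinc0 := fun j => hinc ⟨0, hpos⟩ j (Fin.mk_le_of_le_val (Nat.zero_le _))
      generalize b ⟨0, hpos⟩ = v at hinc0
      have hinj : Function.Injective (fun j => (a j).1.2) := by
        intro i j hij
        have hij' : (a i).1.2.val = (a j).1.2.val := congrArg Fin.val hij
        have h1 := hinc0 i
        have h2 := hinc0 j
        have e : a i = a j := by
          unfold baseLe at h1 h2
          apply Subtype.ext
          apply Prod.ext <;> apply Fin.ext <;> omega
        rcases lt_trichotomy i j with hl | hl | hl
        · exact absurd e (ha i j hl).2
        · exact hl
        · exact absurd e.symm (ha j i hl).2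
      obtain ⟨j, hj⟩ := Finite.injective_iff_surjective.mp hinj v.1.2
      have hj' : (a j).1.2.val = v.1.2.val := congrArg Fin.val hj
      have h1 := hinc0 j
      unfold baseLe at h1
      omega

/-- Fibres of a lexicographic product are modules. -/
theorem lex_module {α β : Type} {leP : α → α → Prop} {leQ : β → β → Prop}
    {p q r : α × β} (hpq : p.1 = q.1)
    (h : ¬ ((LexLe leP leQ p r ↔ LexLe leP leQ q r) ∧
      (LexLe leP leQ r p ↔ LexLe leP leQ r q))) : r.1 = p.1 := by
  by_contra hne
  apply h
  unfold LexLe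
  have h2 : p.1 ≠ r.1 := fun e => hne e.symm
  have h3 : r.1 ≠ q.1 := hpq ▸ hne
  have h4 : q.1 ≠ r.1 := fun e => h3 e.symm
  simp [hne, h2, h3, h4, hpq]

theorem lex_free {α β : Type} {leP : α → α → Prop} {leQ : β → β → Prop} {k : ℕ}
    (antiP : ∀ a b, leP a b → leP b a → a = b) (antiQ : ∀ a b, leQ a b → leQ b a → a = b)
    (hP : ∀ a b : Fin k → α, ¬ HalfIn leP a b) (hQ : ∀ a b : Fin k → β, ¬ HalfIn leQ a b)
    (a b : Fin k → α × β) : ¬ HalfIn (LexLe leP leQ) a b := by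
  have anti : ∀ p q, LexLe leP leQ p q → LexLe leP leQ q p → p = q := by
    rintro ⟨p, p'⟩ ⟨q, q'⟩ h1 h2
    simp only [LexLe] at h1 h2
    grind
  intro h
  obtain ⟨ha, hb, hinc, hlt⟩ := h
  have hna : ∀ i j, i < j → ¬ LexLe leP leQ (a j) (a i) := fun i j hij hh =>
    (ha i j hij).2 (anti _ _ (ha i j hij).1 hh)
  have hnb : ∀ i j, i < j → ¬ LexLe leP leQ (b j) (b i) := fun i j hij hh =>
    (hb i j hij).2 (anti _ _ (hb i j hij).1 hh)
  -- one incomparable pair in a fibre puts everything in the fibre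
  have step : ∀ i j, i ≤ j → (b i).1 = (a j).1 →
      (∀ t, i ≤ t → (a t).1 = (a j).1) ∧ (∀ s, s ≤ j → (b s).1 = (a j).1) := by
    intro i j hij e
    refine ⟨fun t ht => ?_, fun s hs => ?_⟩
    · rcases lt_trichotomy t j with hl | rfl | hl
      · exact lex_module e.symm (by have := ha t j hl; have := hinc i t ht; tauto)
      · rfl
      · exact lex_module e.symm (by have := ha j t hl; have := hinc i t ht; tauto)
    · rcases lt_trichotomy s i with hl | rfl | hl
      · exact lex_module e.symm (by have := hb s i hl; have := hinc s j hs; tauto)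
      · exact e
      · exact lex_module e.symm (by have := hb i s hl; have := hinc s j hs; tauto)
  have all : ∀ i j, i ≤ j → (b i).1 = (a j).1 →
      ∃ c, (∀ t, (a t).1 = c) ∧ (∀ t, (b t).1 = c) := by
    intro i j hij e
    have hk : 0 < k := i.pos
    obtain ⟨s1, s2⟩ := step i j hij e
    have e1 := s1 ⟨k - 1, by omega⟩ (Fin.le_def.mpr (by have := i.isLt; dsimp only; omega))
    have e2 := s2 ⟨0, hk⟩ (Fin.le_def.mpr (by dsimp only; omega))
    obtain ⟨r1, r2⟩ := step ⟨0, hk⟩ ⟨k - 1, by omega⟩ (Fin.le_def.mpr (by dsimp only; omega))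
      (e2.trans e1.symm)
    exact ⟨_, fun t => r1 t (Fin.le_def.mpr (by dsimp only; omega)),
      fun t => r2 t (Fin.le_def.mpr (by have := t.isLt; dsimp only; omega))⟩
  by_cases hc : ∃ c, (∀ t, (a t).1 = c) ∧ (∀ t, (b t).1 = c)
  · obtain ⟨c, hca, hcb⟩ := hc
    have key : ∀ p q : α × β, p.1 = c → q.1 = c → (LexLe leP leQ p q ↔ leQ p.2 q.2) := by
      intro p q h1 h2
      unfold LexLe
      simp [h1, h2]
    have keyne : ∀ p q : α × β, p.1 = c → q.1 = c → p ≠ q → p.2 ≠ q.2 := by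
      intro p q h1 h2 hne e
      exact hne (Prod.ext (h1.trans h2.symm) e)
    apply hQ (fun t => (a t).2) (fun t => (b t).2)
    refine ⟨fun i j hij => ⟨(key _ _ (hca i) (hca j)).1 (ha i j hij).1,
      keyne _ _ (hca i) (hca j) (ha i j hij).2⟩,
      fun i j hij => ⟨(key _ _ (hcb i) (hcb j)).1 (hb i j hij).1,
      keyne _ _ (hcb i) (hcb j) (hb i j hij).2⟩,
      fun i j hij => ⟨fun h => (hinc i j hij).1 ((key _ _ (hcb i) (hca j)).2 h),
        fun h => (hinc i j hij).2 ((key _ _ (hca j) (hcb i)).2 h)⟩,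
      fun i j hij => ⟨(key _ _ (hca i) (hcb j)).1 (hlt i j hij).1,
      keyne _ _ (hca i) (hcb j) (hlt i j hij).2⟩⟩
  · have n1 : ∀ i j, i ≤ j → (b i).1 ≠ (a j).1 := fun i j hij e => hc (all i j hij e)
    have n2 : ∀ i j, i < j → (a i).1 ≠ (a j).1 := fun i j hij e =>
      n1 j j le_rfl ((lex_module e (by
        have := hlt i j hij; have := hinc j j le_rfl; tauto)).trans e)
    have n3 : ∀ i j, i < j → (b i).1 ≠ (b j).1 := fun i j hij e =>
      n1 i i le_rfl (lex_module e (by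
        have := hlt i j hij; have := hinc i i le_rfl; tauto)).symm
    have n4 : ∀ i j, i < j → (a i).1 ≠ (b j).1 := fun i j hij e =>
      n1 i i le_rfl (lex_module e (by
        have := hb i j hij; have := hinc i i le_rfl; tauto))
    have key : ∀ p q : α × β, p.1 ≠ q.1 → (LexLe leP leQ p q ↔ leP p.1 q.1) := by
      intro p q h1
      unfold LexLe
      simp [h1]
    apply hP (fun t => (a t).1) (fun t => (b t).1)
    refine ⟨fun i j hij => ⟨(key _ _ (n2 i j hij)).1 (ha i j hij).1, n2 i j hij⟩,
      fun i j hij => ⟨(key _ _ (n3 i j hij)).1 (hb i j hij).1, n3 i j hij⟩,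
      fun i j hij => ⟨fun h => (hinc i j hij).1 ((key _ _ (n1 i j hij)).2 h),
        fun h => (hinc i j hij).2 ((key _ _ (n1 i j hij).symm).2 h)⟩,
      fun i j hij => ⟨(key _ _ (n4 i j hij)).1 (hlt i j hij).1, n4 i j hij⟩⟩

theorem enc_inj {n x y x' y' : ℕ} (hy : y < n) (hy' : y' < n)
    (h : x * n + y = x' * n + y') : x = x' ∧ y = y' := by
  have hn : 0 < n := by omega
  have e1 : (x * n + y) / n = x := by
    rw [mul_comm, Nat.mul_add_div hn, Nat.div_eq_of_lt hy]; rfl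
  have e2 : (x' * n + y') / n = x' := by
    rw [mul_comm, Nat.mul_add_div hn, Nat.div_eq_of_lt hy']; rfl
  have : x = x' := by rw [← e1, h, e2]
  subst this
  exact ⟨rfl, by omega⟩

theorem enc_lt {n N x y : ℕ} (hx : x < N) (hy : y < n) : x * n + y < N * n := by
  calc x * n + y < (x + 1) * n := by rw [Nat.add_mul]; omega
    _ ≤ N * n := Nat.mul_le_mul_right _ hx

theorem good_lex {k n1 n2 w1 w2 : ℕ} {α β : Type} {leP : α → α → Prop} {leQ : β → β → Prop}
    {f1 g1 : α → ℕ} {f2 g2 : β → ℕ} (hP : GoodP k n1 w1 α leP f1 g1)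
    (hQ : GoodP k n2 w2 β leQ f2 g2) :
    GoodP k (n1 * n2) (w1 * w2) (α × β) (LexLe leP leQ)
      (fun p => f1 p.1 * w2 + f2 p.2) (fun p => g1 p.1 * n2 + g2 p.2) where
  refl a := Or.inr ⟨rfl, hQ.refl _⟩
  trans := by
    rintro ⟨a, a'⟩ ⟨b, b'⟩ ⟨c, c'⟩ h1 h2
    have t1 := hP.trans a b c
    have t2 := hQ.trans a' b' c'
    have t3 := hP.antisymm a b
    simp only [LexLe] at *
    grind
  antisymm := by
    rintro ⟨p, p'⟩ ⟨q, q'⟩ h1 h2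
    have t1 := hP.antisymm p q
    have t2 := hQ.antisymm p' q'
    simp only [LexLe] at h1 h2
    grind
  flt a := enc_lt (hP.flt _) (hQ.flt _)
  fch a b h := by
    obtain ⟨h1, h2⟩ := enc_inj (hQ.flt _) (hQ.flt _) h
    have t1 := hP.fch _ _ h1
    have t2 := hQ.fch _ _ h2
    unfold LexLe
    by_cases e : a.1 = b.1
    · simpa [e] using t2
    · simpa [e, Ne.symm e] using t1
  glt a := enc_lt (hP.glt _) (hQ.glt _)
  gsurj i hi := by
    have hn : 0 < n2 := by
      rcases Nat.eq_zero_or_pos n2 with h | h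
      · simp [h] at hi
      · exact h
    obtain ⟨a, ha⟩ := hP.gsurj (i / n2) ((Nat.div_lt_iff_lt_mul hn).2 hi)
    obtain ⟨b, hb⟩ := hQ.gsurj (i % n2) (Nat.mod_lt _ hn)
    refine ⟨(a, b), ?_⟩
    simp only [ha, hb]
    exact Nat.div_add_mod' i n2
  gch a b h := by
    obtain ⟨h1, h2⟩ := enc_inj (hQ.glt _) (hQ.glt _) h
    have t1 := hP.gch _ _ h1
    have t2 := hQ.gch _ _ h2
    unfold LexLe
    by_cases e : a.1 = b.1
    · simpa [e] using t2
    · simpa [e, Ne.symm e] using t1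
  gwit a i hi := by
    have hn : 0 < n2 := lt_of_le_of_lt (Nat.zero_le _) (hQ.glt a.2)
    have hm := Nat.div_add_mod' i n2
    have hlt := Nat.mod_lt i hn
    have hle : i / n2 ≤ g1 a.1 := by
      have := (Nat.div_lt_iff_lt_mul (x := i) (y := g1 a.1 + 1) hn).2 (by
        have := hQ.glt a.2
        rw [Nat.add_mul]; omega)
      omega
    rcases Nat.lt_or_eq_of_le hle with hl | he
    · obtain ⟨u, ⟨hu1, hu2⟩, hu3⟩ := hP.gwit a.1 _ hl
      obtain ⟨v, hv⟩ := hQ.gsurj (i % n2) hlt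
      have hne : u ≠ a.1 := by
        rintro rfl
        exact hu1 (hP.refl _)
      refine ⟨(u, v), ?_, by simp only [hu3, hv]; exact hm⟩
      simp [LexLe, hne, hne.symm, hu1, hu2]
    · obtain ⟨v, ⟨hv1, hv2⟩, hv3⟩ := hQ.gwit a.2 (i % n2) (by
        rw [← he] at hi; omega)
      refine ⟨(a.1, v), ?_, by simp only [← he, hv3]; exact hm⟩
      simp [LexLe, hv1, hv2]
  free := lex_free hP.antisymm hQ.antisymm hP.free hQ.free

theorem good_pow (k : ℕ) (hk : 0 < k) (t : ℕ) :
    ∃ (α : Type) (_ : Fintype α) (le : α → α → Prop) (f g : α → ℕ),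
      GoodP k (k ^ t) (2 ^ t) α le f g := by
  induction t with
  | zero =>
    refine ⟨Unit, inferInstance, fun _ _ => True, fun _ => 0, fun _ => 0, ?_⟩
    refine ⟨by simp, by simp, by simp, by simp, by simp, by simp, by simp, by simp, by simp, ?_⟩
    intro a b h
    exact (h.2.2.1 ⟨0, hk⟩ ⟨0, hk⟩ le_rfl).1 trivial
  | succ t ih =>
    obtain ⟨α, _, le, f, g, h⟩ := ih
    rw [pow_succ, pow_succ]
    exact ⟨α × BaseT k, inferInstance, _, _, _, good_lex h (good_base k hk)⟩

/-- Transfer from an arbitrary finite type to `Fin N`. -/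
theorem transfer {α : Type} [Fintype α] (le : α → α → Prop) (n m w : ℕ) (g : α → ℕ)
    (hr : ∀ a, le a a) (ht : ∀ a b c, le a b → le b c → le a c)
    (hs : ∀ a b, le a b → le b a → a = b) (hL : LFree le m) (hW : IsWidth le w)
    (hG : IsGrundy le n g) :
    ∃ (N : ℕ) (le : Fin N → Fin N → Prop) (g : Fin N → ℕ),
      IsPartialOrder (Fin N) le ∧ LFree le m ∧ IsWidth le w ∧ IsGrundy le n g := by
  classical
  let e := Fintype.equivFin α
  refine ⟨Fintype.card α, fun i j => le (e.symm i) (e.symm j), fun i => g (e.symm i),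
    ?_, ?_, ?_, ?_⟩
  · exact { refl := fun a => hr _, trans := fun a b c => ht _ _ _,
            antisymm := fun a b h1 h2 => e.symm.injective (hs _ _ h1 h2) }
  · rintro ⟨x, y, h1, h2, h3, h4⟩
    refine hL ⟨fun i => e.symm (x i), fun i => e.symm (y i), ?_, ?_, ?_, h4⟩
    · exact fun i j hij => ⟨(h1 i j hij).1, fun h => (h1 i j hij).2 (e.symm.injective h)⟩
    · exact fun i j hij => ⟨(h2 i j hij).1, fun h => (h2 i j hij).2 (e.symm.injective h)⟩
    · exact fun i => ⟨(h3 i).1, fun h => (h3 i).2 (e.symm.injective h)⟩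
  · obtain ⟨⟨S, hS, hc⟩, hu⟩ := hW
    refine ⟨⟨S.map e.toEmbedding, ?_, by simpa using hc⟩, ?_⟩
    · intro a ha b hb hab
      simp only [Finset.mem_map_equiv] at ha hb
      exact hS _ ha _ hb (fun h => hab (e.symm.injective h))
    · intro T hT
      have := hu (T.map e.symm.toEmbedding) (by
        intro a ha b hb hab
        simp only [Finset.mem_map_equiv, Equiv.symm_symm] at ha hb
        have := hT _ ha _ hb (fun h => hab (e.injective h))
        simpa using this)
      simpa using this
  · obtain ⟨h1, h2, h3, h4⟩ := hG
    refine ⟨fun v => h1 _, fun i hi hn => ?_, fun u v => h3 _ _, fun v i hi hv => ?_⟩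
    · obtain ⟨v, hv⟩ := h2 i hi hn
      exact ⟨e v, by simpa using hv⟩
    · obtain ⟨u, hu, hg⟩ := h4 _ i hi hv
      exact ⟨e u, by simpa using hu, by simpa using hg⟩

/-- The linear sum of `P` with an antichain of size `w` on top. -/
def topLe {α : Type} (le : α → α → Prop) (w : ℕ) : α ⊕ Fin w → α ⊕ Fin w → Prop
  | .inl a, .inl b => le a b
  | .inl _, .inr _ => True
  | .inr _, .inl _ => False
  | .inr i, .inr j => i = j

theorem final_poset {k n w w' : ℕ} {α : Type} [Fintype α] {le : α → α → Prop}
    {f g : α → ℕ} (h : GoodP k n w' α le f g) (hk : 2 ≤ k) (hw : w' ≤ w) :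
    ∃ (N : ℕ) (le : Fin N → Fin N → Prop) (g : Fin N → ℕ),
      IsPartialOrder (Fin N) le ∧ LFree le (k + 1) ∧ IsWidth le w ∧
        IsGrundy le (max n w) g := by
  classical
  refine transfer (topLe le w) _ _ _ (Sum.elim (fun a => g a + 1) (fun i => i.val + 1))
    ?_ ?_ ?_ ?_ ?_ ?_
  · rintro (a | a)
    · exact h.refl a
    · rfl
  · rintro (a | a) (b | b) (c | c) h1 h2 <;> simp only [topLe] at *
    · exact h.trans _ _ _ h1 h2
    · exact h1.trans h2
  · rintro (a | a) (b | b) h1 h2 <;> simp only [topLe] at *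
    · rw [h.antisymm _ _ h1 h2]
    · rw [h1]
  · rintro ⟨x, y, hx, hy, hxy, hinc⟩
    have hlast : ∀ i : Fin (k + 1), i < Fin.last k →
        ((x (Fin.last k)).isLeft = (y i).isLeft) := by
      intro i hi
      have := hinc _ _ hi
      generalize x (Fin.last k) = p at this
      generalize y i = q at this
      rcases p with p | p <;> rcases q with q | q <;> simp [topLe] at this ⊢
    have hfirst : ∀ j : Fin (k + 1), 0 < j → ((x j).isLeft = (y 0).isLeft) := by
      intro j hj
      have := hinc _ _ hj
      generalize x j = p at this
      generalize y 0 = q at this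
      rcases p with p | p <;> rcases q with q | q <;> simp [topLe] at this ⊢
    have h0 : (y 0).isLeft = true := by
      by_contra hcon
      have e0 := hlast 0 (Fin.lt_def.mpr (by simp; omega))
      have e1 := hlast ⟨1, by omega⟩ (Fin.lt_def.mpr (by simp; omega))
      have hy01 := hy 0 ⟨1, by omega⟩ (Fin.lt_def.mpr (by simp))
      rw [e0] at e1
      generalize y 0 = p at *
      generalize y ⟨1, by omega⟩ = q at *
      rcases p with p | p <;> rcases q with q | q <;> simp_all [topLe]
    have hA : ∀ j : Fin k, ∃ a, x j.succ = .inl a := fun j =>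
      Sum.isLeft_iff.mp ((hfirst _ (Fin.succ_pos j)).trans h0)
    have hB : ∀ j : Fin k, ∃ b, y j.castSucc = .inl b := fun j =>
      Sum.isLeft_iff.mp (((hlast _ (Fin.castSucc_lt_last j)).symm.trans
        (hfirst _ (Fin.lt_def.mpr (by simp; omega)))).trans h0)
    choose a hA using hA
    choose b hB using hB
    apply h.free a b
    have ylt : ∀ i j : Fin k, i < j → le (a i) (b j) := by
      intro i j hij
      have h1 := (hxy i.succ).1
      rcases eq_or_lt_of_le (Fin.succ_le_castSucc_iff.mpr hij) with he | hl
      · rw [hA, he, hB] at h1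
        exact h1
      · have h2 := (hy _ _ hl).1
        have hi : i.succ < Fin.last k := lt_trans hl (Fin.castSucc_lt_last j)
        have h3 := hlast _ hi
        have h4 : (y i.succ).isLeft = true := by
          rw [← h3]
          exact (hfirst _ (Fin.lt_def.mpr (by simp; omega))).trans h0
        obtain ⟨c, hc⟩ := Sum.isLeft_iff.mp h4
        rw [hc, hB] at h2
        rw [hA, hc] at h1
        exact h.trans _ _ _ h1 h2
    have hinc' : ∀ i j : Fin k, i ≤ j → ¬ le (b i) (a j) ∧ ¬ le (a j) (b i) := by
      intro i j hij
      have := hinc _ _ (Fin.castSucc_lt_succ_iff.mpr hij)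
      rw [hA, hB] at this
      exact this
    have hb' : ∀ i j : Fin k, i < j → le (b i) (b j) ∧ b i ≠ b j := by
      intro i j hij
      have := hy _ _ (Fin.castSucc_lt_castSucc_iff.mpr hij)
      rw [hB, hB] at this
      exact ⟨this.1, fun e => this.2 (by rw [e])⟩
    refine ⟨?_, hb', hinc', ?_⟩
    · intro i j hij
      have := hx _ _ (Fin.succ_lt_succ_iff.mpr hij)
      rw [hA, hA] at this
      exact ⟨this.1, fun e => this.2 (by rw [e])⟩
    · intro i j hij
      refine ⟨ylt i j hij, fun e => ?_⟩
      exact (hinc' i i le_rfl).1 (e ▸ (hb' i j hij).1)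
  · refine ⟨⟨Finset.univ.map Function.Embedding.inr, ?_, by simp⟩, ?_⟩
    · intro a ha b hb hab
      simp only [Finset.mem_map, Finset.mem_univ, true_and] at ha hb
      obtain ⟨i, rfl⟩ := ha
      obtain ⟨j, rfl⟩ := hb
      have : i ≠ j := fun e => hab (by rw [e])
      exact ⟨this, this.symm⟩
    · intro S hS
      have : S.card ≤ (Finset.range w).card := by
        apply Finset.card_le_card_of_injOn (Sum.elim f (fun i => i.val))
        · rintro (a | a) _
          · simpa using lt_of_lt_of_le (h.flt a) hw
          · simp
        · rintro a ha b hb hab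
          by_contra hne
          have := hS a ha b hb hne
          rcases a with a | a <;> rcases b with b | b
          · have h2 := h.fch a b (by simpa using hab)
            simp only [topLe] at this
            tauto
          · simp [topLe] at this
          · simp [topLe] at this
          · exact hne (congrArg Sum.inr (Fin.ext (by simpa using hab)))
      simpa using this
  · refine ⟨?_, ?_, ?_, ?_⟩
    · rintro (a | a)
      · have := h.glt a
        simp only [Sum.elim_inl]
        omega
      · simp only [Sum.elim_inr]
        omega
    · intro i hi hn
      by_cases hin : i ≤ n
      · obtain ⟨a, ha⟩ := h.gsurj (i - 1) (by omega)
        exact ⟨.inl a, by simp only [Sum.elim_inl]; omega⟩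
      · exact ⟨.inr ⟨i - 1, by omega⟩, by simp only [Sum.elim_inr]; omega⟩
    · rintro (a | a) (b | b) hab
      · exact h.gch a b (by simpa using hab)
      · exact Or.inl trivial
      · exact Or.inr trivial
      · exact Or.inl (Fin.ext (by simpa using hab))
    · rintro (a | a) i hi hlt
      · simp only [Sum.elim_inl] at hlt
        obtain ⟨u, hu, hg⟩ := h.gwit a (i - 1) (by omega)
        exact ⟨.inl u, hu, by simp only [Sum.elim_inl]; omega⟩
      · simp only [Sum.elim_inr] at hlt
        refine ⟨.inr ⟨i - 1, by omega⟩, ?_, by simp only [Sum.elim_inr]; omega⟩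
        simp only [topLe, Fin.ext_iff]
        omega

theorem numeric (k w : ℕ) (hk : 1 ≤ k) (hw : 0 < w) :
    (w : ℝ) ^ Real.logb 2 (k : ℝ) / (k : ℝ) ≤ (k : ℝ) ^ (Nat.log 2 w) := by
  have hk0 : (0 : ℝ) < k := by exact_mod_cast hk
  have hk1 : (1 : ℝ) ≤ k := by exact_mod_cast hk
  rw [div_le_iff₀ hk0, ← pow_succ]
  have h1 : (w : ℝ) ≤ (2 : ℝ) ^ (Nat.log 2 w + 1) := by
    exact_mod_cast (Nat.lt_pow_succ_log_self (by norm_num) w).le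
  calc (w : ℝ) ^ Real.logb 2 (k : ℝ)
      ≤ ((2 : ℝ) ^ (Nat.log 2 w + 1)) ^ Real.logb 2 (k : ℝ) :=
        Real.rpow_le_rpow (Nat.cast_nonneg _) h1 (Real.logb_nonneg (by norm_num) hk1)
    _ = (k : ℝ) ^ (Nat.log 2 w + 1) := by
        rw [← Real.rpow_natCast, ← Real.rpow_mul (by norm_num), mul_comm,
          Real.rpow_mul (by norm_num), Real.rpow_logb (by norm_num) (by norm_num) hk0,
          Real.rpow_natCast]

/-- for `m > 1` and `w ≥ 1` there is a finite `L_m`-free poset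
of width `w` with an `n`-Grundy coloring where `n ≥ w^(lg(m−1))/(m−1)`. -/
theorem stmt_19 (m w : ℕ) (hm : 1 < m) (hw : 0 < w) :
    ∃ (N : ℕ) (le : Fin N → Fin N → Prop) (n : ℕ) (g : Fin N → ℕ),
      IsPartialOrder (Fin N) le ∧ LFree le m ∧ IsWidth le w ∧
      IsGrundy le n g ∧
      (w : ℝ) ^ Real.logb 2 ((m : ℝ) - 1) / ((m : ℝ) - 1) ≤ (n : ℝ) := by
  obtain ⟨k, rfl⟩ : ∃ k, m = k + 1 := ⟨m - 1, by omega⟩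
  have hk : 1 ≤ k := by omega
  have hnum := numeric k w hk hw
  have hcast : (((k + 1 : ℕ) : ℝ)) - 1 = (k : ℝ) := by push_cast; ring
  rw [hcast]
  rcases Nat.lt_or_ge k 2 with h1 | h2
  · obtain rfl : k = 1 := by omega
    refine ⟨w, fun a b => a = b, w, fun i => i.val + 1, ?_, ?_, ?_, ?_, ?_⟩
    · exact { refl := fun a => rfl, trans := fun a b c => Eq.trans,
              antisymm := fun a b h _ => h }
    · rintro ⟨x, y, hx, -⟩
      exact (hx 0 1 (by decide)).2 (hx 0 1 (by decide)).1
    · refine ⟨⟨Finset.univ, fun a _ b _ hab => ⟨hab, hab.symm⟩, by simp⟩, fun S _ => ?_⟩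
      simpa using Finset.card_le_univ S
    · refine ⟨fun v => ?_, fun i hi hn => ⟨⟨i - 1, by omega⟩, ?_⟩, fun u v huv => ?_,
        fun v i hi hv => ⟨⟨i - 1, by have hv : i < v.val + 1 := hv; omega⟩, ?_, ?_⟩⟩
      · dsimp only; omega
      · dsimp only; omega
      · exact Or.inl (Fin.ext (by simpa using huv))
      · have hv : i < v.val + 1 := hv
        simp only [Fin.ext_iff]; omega
      · dsimp only; omega
    · refine hnum.trans ?_
      simp only [Nat.cast_one, one_pow]
      exact_mod_cast hw
  · obtain ⟨α, _, le, f, g, h⟩ := good_pow k hk (Nat.log 2 w)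
    obtain ⟨N, le', g', p1, p2, p3, p4⟩ := final_poset h h2 (Nat.pow_log_le_self 2 hw.ne')
    refine ⟨N, le', _, g', p1, p2, p3, p4, hnum.trans ?_⟩
    exact_mod_cast le_max_left _ _
end
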